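/- arXiv:1902.05604 — 2 statements merged into one kernel-verified Lean document; each statement's English description precedes it below -/
import Mathlib

section
/- Let N = (P,T,F,Var) be a UDPN, i, f ℚ⁺-markings, and σ a ℚ⁺-run with i →σ_{ℚ⁺} f. Then there exist ℚ⁺-markings i', f' and a ℚ-run σ' with dval(σ') ⊆ dval(σ) such that: (1) i' is ℚ⁺-reachable from i by a ℚ⁺-run of at most |P|·|dval(σ)| steps; (2) i' →σ'_ℚ f'; (3) f is ℚ⁺-reachable from f' by a ℚ⁺-run of at most |P|·|dval(σ)| steps; (4) i'(p,α) > 0 for every (p,α) ∈ Pre(σ'); and (5) f'(p,α) > 0 for every (p,α) ∈ Post(σ'). -/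
open Finset

noncomputable section
open scoped Classical

/-- An unordered data Petri net over places `P`, transitions `T`, variables `V`,
with countably infinite data domain `D = ℕ`.
`pre p t` is the function `F(p,t) : V → ℕ` and `post t p` is `F(t,p) : V → ℕ`. -/
structure UDPN (P T V : Type) where
  pre : P → T → V → ℕ
  post : T → P → V → ℕ

/-- An X-step `(c, t, π)`: coefficient, transition and mode. -/
structure Step (T V : Type) where
  c : ℚ
  t : T
  π : V → ℕ

variable {P T V : Type} [Fintype P] [Fintype T] [Fintype V]

/-- The `P × V` rational matrix `F(•,t)`. -/
def preMat (N : UDPN P T V) (t : T) (p : P) (x : V) : ℚ := (N.pre p t x : ℚ)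

/-- The displacement `Δ(t) = F(t,•) − F(•,t)` as a `P × V` rational matrix. -/
def delta (N : UDPN P T V) (t : T) (p : P) (x : V) : ℚ :=
  (N.post t p x : ℚ) - (N.pre p t x : ℚ)

/-- `A ∘ π⁻¹`: the `P × ℕ` matrix with `(A∘π⁻¹)(p,α) = A(p,x)` if `α = π x`,
and `0` if `α` is outside the range of `π`. (For injective `π` the sum has at
most one nonzero summand.) -/
def compInv (A : P → V → ℚ) (π : V → ℕ) (p : P) (α : ℕ) : ℚ :=
  ∑ x : V, if π x = α then A p x else 0

/-- Only finitely many nonzero columns. -/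
def FinCols (m : P → ℕ → ℚ) : Prop := {α : ℕ | ∃ p, m p α ≠ 0}.Finite

/-- `IsMarking pos m`: `m` is an X-marking; `pos = true` corresponds to `X = ℚ⁺`
(all entries nonnegative), `pos = false` to `X = ℚ`. -/
def IsMarking (pos : Bool) (m : P → ℕ → ℚ) : Prop :=
  FinCols m ∧ (pos = true → ∀ p α, 0 ≤ m p α)

/-- Data values of a marking. -/
def dvalM (m : P → ℕ → ℚ) : Set ℕ := {α | ∃ p, m p α ≠ 0}

/-- A valid X-step: nonnegative coefficient and injective mode.  -/
def IsStep (s : Step T V) : Prop := 0 ≤ s.c ∧ Function.Injective s.π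

/-- A valid X-run: a finite sequence of X-steps. -/
def IsRun (ρ : List (Step T V)) : Prop := ∀ s ∈ ρ, IsStep s

/-- The effect `c · (Δ(t) ∘ π⁻¹)` of a step. -/
def stepEffect (N : UDPN P T V) (s : Step T V) (p : P) (α : ℕ) : ℚ :=
  s.c * compInv (delta N s.t) s.π p α

/-- The effect `Δ(ρ)` of a run. -/
def runEffect (N : UDPN P T V) (ρ : List (Step T V)) (p : P) (α : ℕ) : ℚ :=
  (ρ.map fun s => stepEffect N s p α).sum

/-- A step `(c,t,π)` is fireable at `m` if `m − c·(F(•,t)∘π⁻¹)` is again an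
X-marking: finitely many nonzero columns and (when `pos`) nonnegative entries. -/
def stepFireable (pos : Bool) (N : UDPN P T V) (m : P → ℕ → ℚ) (s : Step T V) : Prop :=
  FinCols (fun p α => m p α - s.c * compInv (preMat N s.t) s.π p α) ∧
  (pos = true → ∀ p α, 0 ≤ m p α - s.c * compInv (preMat N s.t) s.π p α)

/-- A run is fireable at `m` if each step is fireable at the corresponding
intermediate marking. -/
def runFireable (pos : Bool) (N : UDPN P T V) : (P → ℕ → ℚ) → List (Step T V) → Prop
  | _, [] => True
  | m, s :: ρ => stepFireable pos N m s ∧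
      runFireable pos N (fun p α => m p α + stepEffect N s p α) ρ

/-- `m →ρ_X m'` : `ρ` is fireable at `m` and `m' = m + Δ(ρ)`. -/
def Reaches (pos : Bool) (N : UDPN P T V) (i : P → ℕ → ℚ) (ρ : List (Step T V))
    (f : P → ℕ → ℚ) : Prop :=
  runFireable pos N i ρ ∧ f = fun p α => i p α + runEffect N ρ p α

/-- `f` is X-reachable from `i`. -/
def Reach (pos : Bool) (N : UDPN P T V) (i f : P → ℕ → ℚ) : Prop :=
  ∃ ρ, IsRun ρ ∧ Reaches pos N i ρ f

/-- `vars(t)`. -/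
def varsOf (N : UDPN P T V) (t : T) : Set V :=
  {x | ∃ p, N.pre p t x ≠ 0 ∨ N.post t p x ≠ 0}

/-- `maxvars(N) = max_{t ∈ T} |vars(t)|` (0 if `T` is empty). -/
def maxvars (N : UDPN P T V) : ℕ :=
  Finset.univ.sup fun t : T => (varsOf N t).ncard

/-- `dval(ρ)`: the data values used by a run. -/
def runDval (N : UDPN P T V) (ρ : List (Step T V)) : Set ℕ :=
  {α | ∃ s ∈ ρ, ∃ x ∈ varsOf N s.t, s.π x = α}
/-- For `α ∈ E`: the least element of `{β ∈ E | β > α}` if nonempty, else `min E`. -/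
def nextE (E : Finset ℕ) (α : ℕ) : ℕ :=
  if h : (E.filter fun β => α < β).Nonempty then (E.filter fun β => α < β).min' h
  else if h' : E.Nonempty then E.min' h' else 0

/-- The inverse of `nextE` on `E`: the greatest element of `{γ ∈ E | γ < β}` if
nonempty, else `max E`. -/
def prevE (E : Finset ℕ) (β : ℕ) : ℕ :=
  if h : (E.filter fun γ => γ < β).Nonempty then (E.filter fun γ => γ < β).max' h
  else if h' : E.Nonempty then E.max' h' else 0

/-- The mode `π'` of `rot(E,ω)`, characterized by: the permutation matrix `P'` of
`π'` satisfies `P'(•,α) = P(•,α)` for `α ∉ E` and `P'(•,α) = P(•, nextE α)` for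
`α ∈ E` (i.e. `π' x = α ↔ π x = nextE α` for `α ∈ E`). -/
def rotMode {V : Type} (E : Finset ℕ) (π : V → ℕ) (x : V) : ℕ :=
  if π x ∈ E then prevE E (π x) else π x

/-- `rot(E,ω)`. -/
def rotStep (E : Finset ℕ) (s : Step T V) : Step T V := ⟨s.c, s.t, rotMode E s.π⟩

/-- The uniformization `U(E,ω)`: the concatenation
`rot^0(E, ω/|E|) ⋯ rot^{|E|−1}(E, ω/|E|)`. -/
def uniformize (E : Finset ℕ) (s : Step T V) : List (Step T V) :=
  (List.range E.card).map fun k => (rotStep E)^[k] ⟨s.c / (E.card : ℚ), s.t, s.π⟩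

/-- Column `α` of `Δ(t)·P_π` is zero. -/
def zeroCol (N : UDPN P T V) (s : Step T V) (α : ℕ) : Prop :=
  ∀ p, compInv (delta N s.t) s.π p α = 0

/-- The transposition of the data values `α` and `β`. -/
def swapVal (α β γ : ℕ) : ℕ := if γ = α then β else if γ = β then α else γ

/-- `R(α,E,ω)`: if column `α` of `Δ(t)·P_π` is zero then `ω` itself; otherwise the
step whose permutation matrix is obtained from `P_π` by exchanging columns `α` and
`β`, where `β` is the least datum in `E` whose column of `Δ(t)·P_π` is zero. -/
def replaceStep (N : UDPN P T V) (α : ℕ) (E : Finset ℕ) (s : Step T V) : Step T V :=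
  if zeroCol N s α then s
  else if h : (E.filter fun β => zeroCol N s β).Nonempty then
    ⟨s.c, s.t, fun x => swapVal α ((E.filter fun β => zeroCol N s β).min' h) (s.π x)⟩
  else s

/-- `dec(E,α,σ)`: the concatenation `U(E,R(α,E,σ(1))) ⋯ U(E,R(α,E,σ(n)))`. -/
def decRun (N : UDPN P T V) (α : ℕ) (E : Finset ℕ) (σ : List (Step T V)) :
    List (Step T V) :=
  σ.flatMap fun s => uniformize E (replaceStep N α E s)

/-- A histogram of order `q`: a `V × ℕ` matrix with nonnegative rational entries
and finitely many nonzero columns, every row summing to `q` and every column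
summing to at most `q`. -/
def IsHistogram (H : V → ℕ → ℚ) (q : ℚ) : Prop :=
  0 ≤ q ∧ (∀ x α, 0 ≤ H x α) ∧ ({α | ∃ x, H x α ≠ 0}).Finite ∧
  (∀ x, ∑ᶠ α, H x α = q) ∧ (∀ α, ∑ x : V, H x α ≤ q)

/-- `col(H)`: the nonzero columns of `H`. -/
def colH (H : V → ℕ → ℚ) : Set ℕ := {α | ∃ x, H x α ≠ 0}

/-- The permutation matrix `P_π` of a mode `π`. -/
def permMat {V : Type} (π : V → ℕ) (x : V) (α : ℕ) : ℚ := if π x = α then 1 else 0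

/-- `Pre(ρ)`: pairs `(p,α)` of tokens consumed by the run `ρ`. -/
def preSet (N : UDPN P T V) (ρ : List (Step T V)) : Set (P × ℕ) :=
  {pa | ∃ s ∈ ρ, ∃ x, 0 < N.pre pa.1 s.t x ∧ s.π x = pa.2}

/-- `Post(ρ)`: pairs `(p,α)` of tokens produced by the run `ρ`. -/
def postSet (N : UDPN P T V) (ρ : List (Step T V)) : Set (P × ℕ) :=
  {pa | ∃ s ∈ ρ, ∃ x, 0 < N.post s.t pa.1 x ∧ s.π x = pa.2}

/-- A loop-less UDPN: `PrePlace(t) ∩ PostPlace(t) = ∅` for every transition. -/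
def IsLoopless (N : UDPN P T V) : Prop :=
  ∀ t : T, ¬ ∃ p : P, (∃ x, 0 < N.pre p t x) ∧ (∃ x, 0 < N.post t p x)

/-! Whether a step with arbitrarily small coefficient can be fired depends only on the support of
the marking, and firing it with a small enough coefficient adds the produced positions to the
support without emptying any. So replay `σ` from `i`, firing with a small coefficient only the
steps that mark something new: this takes at most `|P|·|dval(σ)|` steps, uses less than one half
of `σ`, and marks everything that `σ` consumes. Doing the same from `f` with `σ` reversed in the
reversed net uses less than the other half. What remains of the two halves is `σ'`. -/

section Generalities

theorem exists_pos_le_forall_mul_lt {ι K : Type*} [Field K] [LinearOrder K]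
    [IsStrictOrderedRing K] [TopologicalSpace K] [OrderTopology K] {F : Set ι} (hF : F.Finite)
    (a : ι → K) {b : ι → K} (hb : ∀ i ∈ F, 0 < b i) {c : K} (hc : 0 < c) :
    ∃ ε, 0 < ε ∧ ε ≤ c ∧ ∀ i ∈ F, ε * a i < b i := by
  have hsmall : ∀ i ∈ F, ∀ᶠ ε in nhdsWithin (0 : K) (Set.Ioi 0), ε * a i < b i := by
    intro i hi
    have hcont : Continuous fun ε : K => ε * a i := by fun_prop
    have hlim := (hcont.tendsto 0).mono_left (nhdsWithin_le_nhds (s := Set.Ioi 0))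
    exact hlim.eventually_lt_const (by simpa using hb i hi)
  obtain ⟨ε, hεb, hε, hεc⟩ :=
    (((Filter.eventually_all_finite hF).2 hsmall).and (Ioc_mem_nhdsGT hc)).exists
  exact ⟨ε, hε, hεc, hεb⟩

end Generalities

section Markings

omit [Fintype P]

theorem FinCols.add {m₁ m₂ : P → ℕ → ℚ} (h₁ : FinCols m₁) (h₂ : FinCols m₂) :
    FinCols (m₁ + m₂) := by
  refine (h₁.union h₂).subset ?_
  rintro α ⟨p, hp⟩
  by_contra h
  simp only [Set.mem_union, Set.mem_ofPred_eq, not_or, not_exists, not_not] at h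
  exact hp (by simp [h.1 p, h.2 p])

theorem FinCols.neg {m : P → ℕ → ℚ} (h : FinCols m) : FinCols (-m) := by
  simpa only [FinCols, Pi.neg_apply, neg_ne_zero] using h

theorem FinCols.sub {m₁ m₂ : P → ℕ → ℚ} (h₁ : FinCols m₁) (h₂ : FinCols m₂) :
    FinCols (m₁ - m₂) := by
  rw [sub_eq_add_neg]
  exact h₁.add h₂.neg

theorem IsMarking.add {pos : Bool} {m₁ m₂ : P → ℕ → ℚ} (h₁ : IsMarking pos m₁)
    (h₂ : IsMarking pos m₂) : IsMarking pos (m₁ + m₂) :=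
  ⟨h₁.1.add h₂.1, fun hpos p α => add_nonneg (h₁.2 hpos p α) (h₂.2 hpos p α)⟩

/-- The support of a `ℚ⁺`-marking: the pairs of a place and a data value that carry tokens. -/
def marked (m : P → ℕ → ℚ) : Set (P × ℕ) := {pa | 0 < m pa.1 pa.2}

theorem FinCols.finite_marked [Finite P] {m : P → ℕ → ℚ} (h : FinCols m) : (marked m).Finite :=
  (Set.finite_univ.prod h).subset fun pa hpa => ⟨trivial, pa.1, ne_of_gt hpa⟩

end Markings

section Runs

omit [Fintype P] [Fintype T] [Fintype V]

theorem IsRun.append {ρ τ : List (Step T V)} (hρ : IsRun ρ) (hτ : IsRun τ) : IsRun (ρ ++ τ) :=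
  List.forall_mem_append.2 ⟨hρ, hτ⟩

theorem IsRun.reverse {ρ : List (Step T V)} (hρ : IsRun ρ) : IsRun ρ.reverse :=
  fun s hs => hρ s (List.mem_reverse.1 hs)

/-- The step `(c, t, π)` with its coefficient replaced by `q`. -/
def Step.withCoeff (s : Step T V) (q : ℚ) : Step T V := ⟨q, s.t, s.π⟩

/-- The run `q · ρ`, in which every coefficient is multiplied by `q`. -/
def scaleRun (q : ℚ) (ρ : List (Step T V)) : List (Step T V) :=
  ρ.map fun s => s.withCoeff (q * s.c)

theorem IsRun.scaleRun {q : ℚ} (hq : 0 ≤ q) {ρ : List (Step T V)} (hρ : IsRun ρ) :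
    IsRun (scaleRun q ρ) :=
  List.forall_mem_map.2 fun s hs => ⟨mul_nonneg hq (hρ s hs).1, (hρ s hs).2⟩

/-- The pairs `(t, π)` fired by a run: all that `Pre`, `Post` and `dval` depend on. -/
def firings (ρ : List (Step T V)) : Set (T × (V → ℕ)) := {tπ | ∃ s ∈ ρ, (s.t, s.π) = tπ}

theorem firings_cons (s : Step T V) (ρ : List (Step T V)) :
    firings (s :: ρ) = insert (s.t, s.π) (firings ρ) := by
  ext tπ
  simp [firings, eq_comm]

theorem firings_append (ρ τ : List (Step T V)) : firings (ρ ++ τ) = firings ρ ∪ firings τ := by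
  ext tπ
  simp [firings, or_and_right, exists_or]

theorem firings_reverse (ρ : List (Step T V)) : firings ρ.reverse = firings ρ := by
  simp [firings]

theorem firings_scaleRun (q : ℚ) (ρ : List (Step T V)) : firings (scaleRun q ρ) = firings ρ := by
  simp [firings, scaleRun, Step.withCoeff]

theorem preSet_mono (N : UDPN P T V) {ρ τ : List (Step T V)} (h : firings ρ ⊆ firings τ) :
    preSet N ρ ⊆ preSet N τ := by
  rintro ⟨p, α⟩ ⟨s, hs, x, hx, hα⟩
  obtain ⟨s', hs', heq⟩ := h ⟨s, hs, rfl⟩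
  obtain ⟨ht, hπ⟩ := Prod.mk.inj heq
  exact ⟨s', hs', x, by rwa [ht], by rwa [hπ]⟩

theorem runDval_mono (N : UDPN P T V) {ρ τ : List (Step T V)} (h : firings ρ ⊆ firings τ) :
    runDval N ρ ⊆ runDval N τ := by
  rintro α ⟨s, hs, x, hx, hα⟩
  obtain ⟨s', hs', heq⟩ := h ⟨s, hs, rfl⟩
  obtain ⟨ht, hπ⟩ := Prod.mk.inj heq
  exact ⟨s', hs', x, by rwa [ht], by rwa [hπ]⟩

theorem preSet_singleton_withCoeff (N : UDPN P T V) (s : Step T V) (q : ℚ) :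
    preSet N [s.withCoeff q] = preSet N [s] := by
  simp [preSet, Step.withCoeff]

theorem postSet_singleton_withCoeff (N : UDPN P T V) (s : Step T V) (q : ℚ) :
    postSet N [s.withCoeff q] = postSet N [s] := by
  simp [postSet, Step.withCoeff]

theorem preSet_cons (N : UDPN P T V) (s : Step T V) (ρ : List (Step T V)) :
    preSet N (s :: ρ) = preSet N [s] ∪ preSet N ρ := by
  ext pa
  simp [preSet]

theorem postSet_cons (N : UDPN P T V) (s : Step T V) (ρ : List (Step T V)) :
    postSet N (s :: ρ) = postSet N [s] ∪ postSet N ρ := by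
  ext pa
  simp [postSet]

theorem postSet_subset_prod_runDval (N : UDPN P T V) (ρ : List (Step T V)) :
    postSet N ρ ⊆ Set.univ ×ˢ runDval N ρ := by
  rintro ⟨p, α⟩ ⟨s, hs, x, hx, hα⟩
  exact ⟨trivial, s, hs, x, ⟨p, Or.inr hx.ne'⟩, hα⟩

theorem runDval_finite [Finite V] (N : UDPN P T V) (ρ : List (Step T V)) :
    (runDval N ρ).Finite := by
  refine (ρ.finite_toSet.biUnion fun s _ => Set.finite_range s.π).subset ?_
  rintro α ⟨s, hs, x, -, hx⟩
  exact Set.mem_biUnion hs ⟨x, hx⟩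

theorem postSet_finite [Finite P] [Finite V] (N : UDPN P T V) (ρ : List (Step T V)) :
    (postSet N ρ).Finite :=
  (Set.finite_univ.prod (runDval_finite N ρ)).subset (postSet_subset_prod_runDval N ρ)

theorem ncard_postSet_le [Finite P] [Finite V] (N : UDPN P T V) (ρ : List (Step T V)) :
    (postSet N ρ).ncard ≤ Nat.card P * (runDval N ρ).ncard := by
  rw [← Set.ncard_univ, ← Set.ncard_prod]
  exact Set.ncard_le_ncard (postSet_subset_prod_runDval N ρ)
    (Set.finite_univ.prod (runDval_finite N ρ))

/-- The net with the flow reversed: every transition consumes what it used to produce and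
produces what it used to consume. -/
def UDPN.reverse (N : UDPN P T V) : UDPN P T V where
  pre p t := N.post t p
  post t p := N.pre p t

theorem preSet_reverse (N : UDPN P T V) (ρ : List (Step T V)) :
    preSet N.reverse ρ.reverse = postSet N ρ := by
  simp only [preSet, postSet, UDPN.reverse, List.mem_reverse]

theorem runDval_reverse (N : UDPN P T V) (ρ : List (Step T V)) :
    runDval N.reverse ρ.reverse = runDval N ρ := by
  simp only [runDval, varsOf, UDPN.reverse, List.mem_reverse, or_comm]

end Runs

section Effects

omit [Fintype P] [Fintype T]

/-- The matrix `c · (F(•,t) ∘ π⁻¹)` of tokens consumed by a step `(c, t, π)`. The tokens it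
produces are `consumption N.reverse`. -/
def consumption (N : UDPN P T V) (s : Step T V) (p : P) (α : ℕ) : ℚ :=
  s.c * compInv (preMat N s.t) s.π p α

theorem stepEffect_eq_sub (N : UDPN P T V) (s : Step T V) :
    stepEffect N s = consumption N.reverse s - consumption N s := by
  funext p α
  simp only [stepEffect, consumption, compInv, delta, preMat, UDPN.reverse, Pi.sub_apply,
    ← mul_sub, ← Finset.sum_sub_distrib, ite_sub_ite, sub_zero]

theorem stepEffect_reverse (N : UDPN P T V) (s : Step T V) :
    stepEffect N.reverse s = -stepEffect N s := by
  rw [stepEffect_eq_sub, stepEffect_eq_sub, neg_sub]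
  rfl

theorem compInv_preMat_pos_iff (N : UDPN P T V) (t : T) (π : V → ℕ) (p : P) (α : ℕ) :
    0 < compInv (preMat N t) π p α ↔ ∃ x, 0 < N.pre p t x ∧ π x = α := by
  have hnonneg : ∀ x ∈ univ, 0 ≤ if π x = α then preMat N t p x else 0 :=
    fun x _ => ite_nonneg (Nat.cast_nonneg _) le_rfl
  simp only [compInv, Finset.sum_pos_iff_of_nonneg hnonneg, mem_univ, true_and]
  refine exists_congr fun x => ?_
  split_ifs with h <;> simp [h, preMat]

theorem compInv_preMat_nonneg (N : UDPN P T V) (t : T) (π : V → ℕ) (p : P) (α : ℕ) :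
    0 ≤ compInv (preMat N t) π p α :=
  Finset.sum_nonneg fun _ _ => ite_nonneg (Nat.cast_nonneg _) le_rfl

theorem consumption_nonneg (N : UDPN P T V) {s : Step T V} (hc : 0 ≤ s.c) (p : P) (α : ℕ) :
    0 ≤ consumption N s p α :=
  mul_nonneg hc (compInv_preMat_nonneg N s.t s.π p α)

theorem marked_consumption (N : UDPN P T V) {s : Step T V} (hc : 0 < s.c) :
    marked (consumption N s) = preSet N [s] := by
  ext ⟨p, α⟩
  simp [marked, consumption, preSet, mul_pos_iff_of_pos_left hc, compInv_preMat_pos_iff]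

theorem finCols_consumption (N : UDPN P T V) (s : Step T V) : FinCols (consumption N s) := by
  refine (Set.finite_range s.π).subset ?_
  rintro α ⟨p, hp⟩
  by_contra h
  exact hp (mul_eq_zero_of_right _ (Finset.sum_eq_zero fun x _ => if_neg fun hx => h ⟨x, hx⟩))

theorem finCols_stepEffect (N : UDPN P T V) (s : Step T V) : FinCols (stepEffect N s) := by
  rw [stepEffect_eq_sub]
  exact (finCols_consumption N.reverse s).sub (finCols_consumption N s)

theorem stepFireable_iff {pos : Bool} {N : UDPN P T V} {m : P → ℕ → ℚ} {s : Step T V} :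
    stepFireable pos N m s ↔ IsMarking pos (m - consumption N s) :=
  Iff.rfl

theorem stepFireable.isMarking {pos : Bool} {N : UDPN P T V} {m : P → ℕ → ℚ} {s : Step T V}
    (h : stepFireable pos N m s) (hc : 0 ≤ s.c) : IsMarking pos (m + stepEffect N s) := by
  have hprod : IsMarking pos (consumption N.reverse s) :=
    ⟨finCols_consumption N.reverse s, fun _ => consumption_nonneg N.reverse hc⟩
  rw [stepEffect_eq_sub, add_sub_left_comm, add_comm]
  exact (stepFireable_iff.1 h).add hprod

theorem runEffect_cons (N : UDPN P T V) (s : Step T V) (ρ : List (Step T V)) :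
    runEffect N (s :: ρ) = stepEffect N s + runEffect N ρ := by
  funext p α
  simp [runEffect]

theorem runEffect_append (N : UDPN P T V) (ρ τ : List (Step T V)) :
    runEffect N (ρ ++ τ) = runEffect N ρ + runEffect N τ := by
  funext p α
  simp [runEffect]

theorem runEffect_scaleRun (N : UDPN P T V) (q : ℚ) (ρ : List (Step T V)) :
    runEffect N (scaleRun q ρ) = q • runEffect N ρ := by
  funext p α
  simp only [runEffect, scaleRun, stepEffect, Step.withCoeff, List.map_map, Pi.smul_apply,
    smul_eq_mul, ← List.sum_map_mul_left, Function.comp_def, mul_assoc]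

theorem runEffect_reverse (N : UDPN P T V) (ρ : List (Step T V)) :
    runEffect N.reverse ρ.reverse = -runEffect N ρ := by
  funext p α
  simp [runEffect, List.sum_reverse, stepEffect_reverse, List.sum_neg, Function.comp_def]

end Effects

section Firing

omit [Fintype P] [Fintype T]

variable {pos : Bool} {N : UDPN P T V} {m m' m'' : P → ℕ → ℚ} {s : Step T V}
  {ρ τ : List (Step T V)}

theorem reaches_nil_iff : Reaches pos N m [] m' ↔ m' = m := by
  simp [Reaches, runFireable, runEffect]

theorem reaches_cons_iff :
    Reaches pos N m (s :: ρ) m' ↔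
      stepFireable pos N m s ∧ Reaches pos N (m + stepEffect N s) ρ m' := by
  change (_ ∧ _) ∧ m' = m + runEffect N (s :: ρ) ↔
    _ ∧ _ ∧ m' = m + stepEffect N s + runEffect N ρ
  rw [runEffect_cons, add_assoc, and_assoc]
  rfl

theorem Reaches.append (h : Reaches pos N m ρ m') (h' : Reaches pos N m' τ m'') :
    Reaches pos N m (ρ ++ τ) m'' := by
  induction ρ generalizing m with
  | nil => rwa [reaches_nil_iff.1 h] at h'
  | cons s ρ ih =>
    obtain ⟨hs, hρ⟩ := reaches_cons_iff.1 h
    exact reaches_cons_iff.2 ⟨hs, ih hρ⟩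

theorem Reaches.eq_add (h : Reaches pos N m ρ m') : m' = m + runEffect N ρ := h.2

theorem stepFireable.reverse (h : stepFireable pos N m s) :
    stepFireable pos N.reverse (m + stepEffect N s) s := by
  rwa [stepFireable_iff, stepEffect_eq_sub, add_sub_assoc, sub_sub_cancel_left,
    ← sub_eq_add_neg, ← stepFireable_iff]

theorem Reaches.reverse (h : Reaches pos N m ρ m') :
    Reaches pos N.reverse m' ρ.reverse m := by
  induction ρ generalizing m with
  | nil => exact reaches_nil_iff.2 (reaches_nil_iff.1 h).symm
  | cons s ρ ih =>
    obtain ⟨hs, hρ⟩ := reaches_cons_iff.1 h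
    rw [List.reverse_cons]
    refine (ih hρ).append (reaches_cons_iff.2 ⟨hs.reverse, reaches_nil_iff.2 ?_⟩)
    rw [stepEffect_reverse, add_neg_cancel_right]

theorem Reaches.isMarking (h : Reaches pos N m ρ m') (hm : IsMarking pos m) (hρ : IsRun ρ) :
    IsMarking pos m' := by
  induction ρ generalizing m with
  | nil => rwa [reaches_nil_iff.1 h]
  | cons s ρ ih =>
    obtain ⟨hs, hρ'⟩ := List.forall_mem_cons.1 hρ
    obtain ⟨hfire, hreach⟩ := reaches_cons_iff.1 h
    exact ih hreach (hfire.isMarking hs.1) hρ'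

theorem reaches_false_of_eq_add (hm : FinCols m) (h : m' = m + runEffect N ρ) :
    Reaches false N m ρ m' := by
  induction ρ generalizing m with
  | nil => exact ⟨trivial, h⟩
  | cons s ρ ih =>
    rw [runEffect_cons, ← add_assoc] at h
    exact reaches_cons_iff.2 ⟨stepFireable_iff.2 ⟨hm.sub (finCols_consumption N s), nofun⟩,
      ih (hm.add (finCols_stepEffect N s)) h⟩

theorem Reaches.filter_coeff_pos (h : Reaches pos N m ρ m') (hρ : IsRun ρ) :
    Reaches pos N m (ρ.filter fun s => 0 < s.c) m' := by
  induction ρ generalizing m with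
  | nil => exact h
  | cons s ρ ih =>
    obtain ⟨hs, hρ'⟩ := List.forall_mem_cons.1 hρ
    obtain ⟨hfire, hreach⟩ := reaches_cons_iff.1 h
    rcases hs.1.eq_or_lt with hc | hc
    · have hzero : stepEffect N s = 0 := by
        funext p α
        simp [stepEffect, ← hc]
      rw [List.filter_cons_of_neg (by simp [← hc])]
      rw [hzero, add_zero] at hreach
      exact ih hreach hρ'
    · rw [List.filter_cons_of_pos (by simpa using hc)]
      exact reaches_cons_iff.2 ⟨hfire, ih hreach hρ'⟩

theorem Reaches.exists_coeff_pos (h : Reaches pos N m ρ m') (hρ : IsRun ρ) :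
    ∃ ρ₀, IsRun ρ₀ ∧ (∀ s ∈ ρ₀, 0 < s.c) ∧ firings ρ₀ ⊆ firings ρ ∧ Reaches pos N m ρ₀ m' :=
  ⟨ρ.filter fun s => 0 < s.c, fun s hs => hρ s (List.mem_of_mem_filter hs),
    fun _ hs => of_decide_eq_true (List.of_mem_filter hs :),
    fun _ ⟨s, hs, h⟩ => ⟨s, List.mem_of_mem_filter hs, h⟩, h.filter_coeff_pos hρ⟩

end Firing

section Support

omit [Fintype P] [Fintype T]

variable {N : UDPN P T V} {m : P → ℕ → ℚ} {s : Step T V}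

theorem stepFireable.preSet_subset_marked (h : stepFireable true N m s) (hc : 0 < s.c) :
    preSet N [s] ⊆ marked m := by
  rw [← marked_consumption N hc]
  exact fun pa hpa => lt_of_lt_of_le hpa (sub_nonneg.1 (h.2 rfl pa.1 pa.2))

theorem marked_add_stepEffect_subset (hc : 0 < s.c) :
    marked (m + stepEffect N s) ⊆ marked m ∪ postSet N [s] := by
  have hpost : marked (consumption N.reverse s) = postSet N [s] := marked_consumption N.reverse hc
  rintro ⟨p, α⟩ (hpa : 0 < m p α + stepEffect N s p α)
  rw [stepEffect_eq_sub, Pi.sub_apply, Pi.sub_apply] at hpa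
  by_contra! hnot
  rw [← hpost, Set.mem_union, not_or] at hnot
  have hm : m p α ≤ 0 := not_lt.1 hnot.1
  have hprod : consumption N.reverse s p α ≤ 0 := not_lt.1 hnot.2
  linarith [consumption_nonneg N hc.le p α]

theorem exists_withCoeff_fireable [Finite P] (hm : IsMarking true m)
    (hpre : preSet N [s] ⊆ marked m) (hc : 0 < s.c) :
    ∃ ε, 0 < ε ∧ ε ≤ s.c ∧ stepFireable true N m (s.withCoeff ε) ∧
      marked m ∪ postSet N [s] ⊆ marked (m + stepEffect N (s.withCoeff ε)) := by
  obtain ⟨ε, hε, hεc, hsmall⟩ := exists_pos_le_forall_mul_lt hm.1.finite_marked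
    (fun pa => compInv (preMat N s.t) s.π pa.1 pa.2) (fun _ h => h) hc
  set s' := s.withCoeff ε
  have hkeep : ∀ pa ∈ marked m, 0 < (m - consumption N s') pa.1 pa.2 :=
    fun pa hpa => sub_pos.2 (hsmall pa hpa)
  have hpre' : marked (consumption N s') = preSet N [s] :=
    (marked_consumption N hε).trans (preSet_singleton_withCoeff N s ε)
  have hpost' : marked (consumption N.reverse s') = postSet N [s] :=
    (marked_consumption N.reverse hε).trans (preSet_singleton_withCoeff N.reverse s ε)
  have hrest : ∀ p α, 0 ≤ (m - consumption N s') p α := by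
    intro p α
    by_cases hpa : (p, α) ∈ marked m
    · exact (hkeep _ hpa).le
    · have hnot : ¬ 0 < consumption N s' p α := fun h => hpa (hpre (hpre' ▸ h))
      exact sub_nonneg.2 ((not_lt.1 hnot).trans (hm.2 rfl p α))
  refine ⟨ε, hε, hεc, ⟨hm.1.sub (finCols_consumption N s'), fun _ => hrest⟩, ?_⟩
  rw [stepEffect_eq_sub, add_sub_left_comm, add_comm, ← hpost']
  rintro pa (hpa | hpa)
  · exact add_pos_of_pos_of_nonneg (hkeep pa hpa) (consumption_nonneg N.reverse hε.le _ _)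
  · exact add_pos_of_nonneg_of_pos (hrest _ _) hpa

/-- Fireability of a run at the level of supports: every step consumes only from positions that
belong to `S` or were produced by an earlier step. Coefficients play no role. -/
def SupportFireable (N : UDPN P T V) : Set (P × ℕ) → List (Step T V) → Prop
  | _, [] => True
  | S, s :: ρ => preSet N [s] ⊆ S ∧ SupportFireable N (S ∪ postSet N [s]) ρ

omit [Fintype V] in
theorem SupportFireable.mono {S S' : Set (P × ℕ)} {ρ : List (Step T V)}
    (h : SupportFireable N S ρ) (hS : S ⊆ S') : SupportFireable N S' ρ := by
  induction ρ generalizing S S' with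
  | nil => trivial
  | cons s ρ ih => exact ⟨h.1.trans hS, ih h.2 (Set.union_subset_union_left _ hS)⟩

omit [Fintype V] in
theorem SupportFireable.scaleRun {S : Set (P × ℕ)} {ρ : List (Step T V)}
    (h : SupportFireable N S ρ) (q : ℚ) : SupportFireable N S (scaleRun q ρ) := by
  induction ρ generalizing S with
  | nil => trivial
  | cons s ρ ih =>
    refine ⟨(preSet_singleton_withCoeff N s _).trans_subset h.1, ?_⟩
    rw [postSet_singleton_withCoeff]
    exact ih h.2

theorem supportFireable_marked {ρ : List (Step T V)} (h : runFireable true N m ρ)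
    (hpos : ∀ s ∈ ρ, 0 < s.c) : SupportFireable N (marked m) ρ := by
  induction ρ generalizing m with
  | nil => trivial
  | cons s ρ ih =>
    obtain ⟨hc, hpos'⟩ := List.forall_mem_cons.1 hpos
    exact ⟨h.1.preSet_subset_marked hc, (ih h.2 hpos').mono (marked_add_stepEffect_subset hc)⟩

end Support

section Saturation

omit [Fintype P] [Fintype T]

variable {N : UDPN P T V} {m : P → ℕ → ℚ} {σ ρ τ : List (Step T V)} {s : Step T V}

/-- `τ` is what remains of the run `σ` once `ρ` has been taken out of it. -/
structure IsRemainder (N : UDPN P T V) (σ ρ τ : List (Step T V)) : Prop where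
  isRun : IsRun τ
  firings_subset : firings τ ⊆ firings σ
  effect_add : runEffect N ρ + runEffect N τ = runEffect N σ

theorem isRemainder_nil : IsRemainder N [] [] [] :=
  ⟨nofun, subset_rfl, by simp [runEffect, funext_iff]⟩

theorem IsRemainder.cons_keep (h : IsRemainder N σ ρ τ) (hs : IsStep s) :
    IsRemainder N (s :: σ) ρ (s :: τ) where
  isRun := List.forall_mem_cons.2 ⟨hs, h.isRun⟩
  firings_subset := by
    rw [firings_cons, firings_cons]
    exact Set.insert_subset_insert h.firings_subset
  effect_add := by rw [runEffect_cons, runEffect_cons, add_left_comm, h.effect_add]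

theorem IsRemainder.cons_withCoeff (h : IsRemainder N σ ρ τ) (hs : IsStep s) {ε : ℚ}
    (hε : ε ≤ s.c) :
    IsRemainder N (s :: σ) (s.withCoeff ε :: ρ) (s.withCoeff (s.c - ε) :: τ) where
  isRun := List.forall_mem_cons.2 ⟨⟨sub_nonneg.2 hε, hs.2⟩, h.isRun⟩
  firings_subset := by
    rw [firings_cons, firings_cons]
    exact Set.insert_subset_insert h.firings_subset
  effect_add := by
    have hsplit :
        stepEffect N (s.withCoeff ε) + stepEffect N (s.withCoeff (s.c - ε)) = stepEffect N s := by
      funext p α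
      simp only [stepEffect, Step.withCoeff, Pi.add_apply]
      ring
    rw [runEffect_cons, runEffect_cons, runEffect_cons, add_add_add_comm, hsplit, h.effect_add]

theorem IsRemainder.reverse (h : IsRemainder N σ ρ τ) :
    IsRemainder N.reverse σ.reverse ρ.reverse τ.reverse where
  isRun := h.isRun.reverse
  firings_subset := by
    rw [firings_reverse, firings_reverse]
    exact h.firings_subset
  effect_add := by
    rw [runEffect_reverse, runEffect_reverse, runEffect_reverse, ← neg_add, h.effect_add]

theorem SupportFireable.exists_saturating_run [Finite P] (hfire : SupportFireable N (marked m) σ)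
    (hm : IsMarking true m) (hσ : IsRun σ) (hpos : ∀ s ∈ σ, 0 < s.c) :
    ∃ ρ τ m', IsRun ρ ∧ ρ.length ≤ (postSet N σ \ marked m).ncard ∧ Reaches true N m ρ m' ∧
      IsRemainder N σ ρ τ ∧ marked m ∪ preSet N σ ⊆ marked m' := by
  induction σ generalizing m with
  | nil => exact ⟨[], [], m, nofun, Nat.zero_le _, reaches_nil_iff.2 rfl, isRemainder_nil,
      by simp [preSet]⟩
  | cons s σ ih =>
    obtain ⟨hpre, hrest⟩ := hfire
    obtain ⟨hs, hσ'⟩ := List.forall_mem_cons.1 hσ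
    obtain ⟨hc, hpos'⟩ := List.forall_mem_cons.1 hpos
    have hfin : (postSet N (s :: σ) \ marked m).Finite := (postSet_finite N (s :: σ)).sdiff
    rw [preSet_cons, ← Set.union_assoc, Set.union_eq_self_of_subset_right hpre]
    rw [postSet_cons] at hfin ⊢
    by_cases hnew : postSet N [s] ⊆ marked m
    · rw [Set.union_eq_self_of_subset_right hnew] at hrest
      obtain ⟨ρ, τ, m', hρ, hlen, hreach, hrem, hmarked⟩ := ih hrest hm hσ' hpos'
      refine ⟨ρ, s :: τ, m', hρ, hlen.trans (Set.ncard_le_ncard ?_ hfin), hreach,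
        hrem.cons_keep hs, hmarked⟩
      exact Set.sdiff_subset_sdiff_left Set.subset_union_right
    · obtain ⟨ε, hε, hεc, hstep, hgrow⟩ := exists_withCoeff_fireable hm hpre hc
      obtain ⟨hkeep, hpost⟩ := Set.union_subset_iff.1 hgrow
      obtain ⟨ρ, τ, m', hρ, hlen, hreach, hrem, hmarked⟩ :=
        ih (hrest.mono hgrow) (hstep.isMarking hε.le) hσ' hpos'
      refine ⟨s.withCoeff ε :: ρ, s.withCoeff (s.c - ε) :: τ, m',
        List.forall_mem_cons.2 ⟨⟨hε.le, hs.2⟩, hρ⟩, ?_, reaches_cons_iff.2 ⟨hstep, hreach⟩,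
        hrem.cons_withCoeff hs hεc, (Set.union_subset_union_left _ hkeep).trans hmarked⟩
      obtain ⟨pa, hpa, hpam⟩ := Set.not_subset.1 hnew
      refine hlen.trans_lt (Set.ncard_lt_ncard (Set.ssubset_iff_exists.2 ⟨?_, pa, ?_, ?_⟩) hfin)
      · exact Set.sdiff_subset_sdiff Set.subset_union_right hkeep
      · exact ⟨Or.inl hpa, hpam⟩
      · exact fun h => h.2 (hpost hpa)

theorem exists_saturating_half_run [Finite P] (hfire : runFireable true N m σ)
    (hm : IsMarking true m) (hσ : IsRun σ) (hpos : ∀ s ∈ σ, 0 < s.c) :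
    ∃ ρ τ m', IsRun ρ ∧ ρ.length ≤ Nat.card P * (runDval N σ).ncard ∧ Reaches true N m ρ m' ∧
      IsRemainder N (scaleRun (1 / 2) σ) ρ τ ∧ preSet N σ ⊆ marked m' := by
  obtain ⟨ρ, τ, m', hρ, hlen, hreach, hrem, hmarked⟩ :=
    ((supportFireable_marked hfire hpos).scaleRun (1 / 2)).exists_saturating_run hm
      (hσ.scaleRun one_half_pos.le)
      (List.forall_mem_map.2 fun s hs => mul_pos one_half_pos (hpos s hs))
  refine ⟨ρ, τ, m', hρ, ?_, hreach, hrem, ?_⟩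
  · calc ρ.length ≤ (postSet N (scaleRun (1 / 2) σ)).ncard :=
          hlen.trans (Set.ncard_le_ncard Set.sdiff_subset (postSet_finite N _))
      _ ≤ Nat.card P * (runDval N (scaleRun (1 / 2) σ)).ncard := ncard_postSet_le N _
      _ ≤ Nat.card P * (runDval N σ).ncard := Nat.mul_le_mul_left _ <|
          Set.ncard_le_ncard (runDval_mono N (firings_scaleRun _ σ).subset) (runDval_finite N σ)
  · exact (preSet_mono N (firings_scaleRun _ σ).symm.subset).trans
      (Set.subset_union_right.trans hmarked)

theorem exists_saturating_half_run_backward [Finite P] {f : P → ℕ → ℚ}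
    (hreach : Reaches true N m σ f) (hf : IsMarking true f) (hσ : IsRun σ)
    (hpos : ∀ s ∈ σ, 0 < s.c) :
    ∃ ρ τ m', IsRun ρ ∧ ρ.length ≤ Nat.card P * (runDval N σ).ncard ∧ Reaches true N m' ρ f ∧
      IsRemainder N (scaleRun (1 / 2) σ) ρ τ ∧ postSet N σ ⊆ marked m' := by
  obtain ⟨ρ, τ, m', hρ, hlen, hback, hrem, hmarked⟩ :=
    exists_saturating_half_run hreach.reverse.1 hf hσ.reverse
      fun s hs => hpos s (List.mem_reverse.1 hs)
  rw [runDval_reverse, ← List.length_reverse] at hlen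
  rw [preSet_reverse] at hmarked
  have hrem' := hrem.reverse
  rw [scaleRun, ← List.map_reverse, List.reverse_reverse] at hrem'
  exact ⟨ρ.reverse, τ.reverse, m', hρ.reverse, hlen, hback.reverse, hrem', hmarked⟩

theorem Reaches.of_isRemainder_half {i f i' f' : P → ℕ → ℚ} {ρ₁ ρ₂ τ₁ τ₂ : List (Step T V)}
    {pos : Bool} (hσ : Reaches pos N i σ f) (hi' : FinCols i') (hρ₁ : Reaches pos N i ρ₁ i')
    (hρ₂ : Reaches pos N f' ρ₂ f) (hτ₁ : IsRemainder N (scaleRun (1 / 2) σ) ρ₁ τ₁)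
    (hτ₂ : IsRemainder N (scaleRun (1 / 2) σ) ρ₂ τ₂) :
    Reaches false N i' (τ₁ ++ τ₂) f' := by
  refine reaches_false_of_eq_add hi' ?_
  have h₁ := hτ₁.effect_add
  have h₂ := hτ₂.effect_add
  rw [runEffect_scaleRun] at h₁ h₂
  rw [runEffect_append]
  linear_combination (norm := module) hσ.eq_add - hρ₁.eq_add - hρ₂.eq_add - h₁ - h₂

end Saturation

omit [Fintype T] in
theorem qplus_reach_decomposition_general
    (N : UDPN P T V) (i f : P → ℕ → ℚ) (hi : IsMarking true i)
    (σ : List (Step T V)) (hσ : IsRun σ) (hσr : Reaches true N i σ f) :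
    ∃ (i' f' : P → ℕ → ℚ) (σ' : List (Step T V)),
      IsMarking true i' ∧ IsMarking true f' ∧ IsRun σ' ∧
      runDval N σ' ⊆ runDval N σ ∧
      (∃ ρ₁ : List (Step T V), IsRun ρ₁ ∧
        ρ₁.length ≤ Fintype.card P * (runDval N σ).ncard ∧
        Reaches true N i ρ₁ i') ∧
      Reaches false N i' σ' f' ∧
      (∃ ρ₂ : List (Step T V), IsRun ρ₂ ∧
        ρ₂.length ≤ Fintype.card P * (runDval N σ).ncard ∧
        Reaches true N f' ρ₂ f) ∧
      (∀ pa ∈ preSet N σ', 0 < i' pa.1 pa.2) ∧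
      (∀ pa ∈ postSet N σ', 0 < f' pa.1 pa.2) := by
  obtain ⟨σ₀, hσ₀, hpos, hsub, hreach⟩ := hσr.exists_coeff_pos hσ
  have hf : IsMarking true f := hσr.isMarking hi hσ
  obtain ⟨ρ₁, τ₁, i', hρ₁, hlen₁, hreach₁, hrem₁, hpre⟩ :=
    exists_saturating_half_run hreach.1 hi hσ₀ hpos
  obtain ⟨ρ₂, τ₂, f', hρ₂, hlen₂, hreach₂, hrem₂, hpost⟩ :=
    exists_saturating_half_run_backward hreach hf hσ₀ hpos
  have hfirings : firings (τ₁ ++ τ₂) ⊆ firings σ₀ := by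
    rw [firings_append, ← firings_scaleRun (1 / 2) σ₀]
    exact Set.union_subset hrem₁.firings_subset hrem₂.firings_subset
  have hcard : Nat.card P * (runDval N σ₀).ncard ≤ Fintype.card P * (runDval N σ).ncard := by
    rw [Nat.card_eq_fintype_card]
    exact Nat.mul_le_mul_left _ (Set.ncard_le_ncard (runDval_mono N hsub) (runDval_finite N σ))
  have hi' : IsMarking true i' := hreach₁.isMarking hi hρ₁
  have hf' : IsMarking true f' := hreach₂.reverse.isMarking hf hρ₂.reverse
  exact ⟨i', f', τ₁ ++ τ₂, hi', hf', hrem₁.isRun.append hrem₂.isRun,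
    runDval_mono N (hfirings.trans hsub), ⟨ρ₁, hρ₁, hlen₁.trans hcard, hreach₁⟩,
    hreach.of_isRemainder_half hi'.1 hreach₁ hreach₂ hrem₁ hrem₂,
    ⟨ρ₂, hρ₂, hlen₂.trans hcard, hreach₂⟩, (preSet_mono N hfirings).trans hpre,
    (preSet_mono N.reverse hfirings).trans hpost⟩

/-- Strengthened decomposition of a ℚ⁺-run: the ℚ⁺-runs from
`i` to `i'` and from `f'` to `f` can be chosen with at most `|P|·|dval(σ)|`
steps, and `σ'` uses only data values of `σ`. -/
theorem qplus_reach_decomposition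
    (N : UDPN P T V) (i f : P → ℕ → ℚ)
    (hi : IsMarking true i) (hf : IsMarking true f)
    (σ : List (Step T V)) (hσ : IsRun σ) (hσr : Reaches true N i σ f) :
    ∃ (i' f' : P → ℕ → ℚ) (σ' : List (Step T V)),
      IsMarking true i' ∧ IsMarking true f' ∧ IsRun σ' ∧
      runDval N σ' ⊆ runDval N σ ∧
      (∃ ρ₁ : List (Step T V), IsRun ρ₁ ∧
        ρ₁.length ≤ Fintype.card P * (runDval N σ).ncard ∧
        Reaches true N i ρ₁ i') ∧
      Reaches false N i' σ' f' ∧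
      (∃ ρ₂ : List (Step T V), IsRun ρ₂ ∧
        ρ₂.length ≤ Fintype.card P * (runDval N σ).ncard ∧
        Reaches true N f' ρ₂ f) ∧
      (∀ pa ∈ preSet N σ', 0 < i' pa.1 pa.2) ∧
      (∀ pa ∈ postSet N σ', 0 < f' pa.1 pa.2) :=
  qplus_reach_decomposition_general N i f hi σ hσ hσr
end
end

section
/- For every UDPN N = (P,T,F,Var) and ℚ⁺-markings i, f of N, there exist a loop-less UDPN N' = (P',T',F',Var) with |P'| = 2·|P| and |T'| = |T| + |P|, and ℚ⁺-markings i', f' of N', such that f is ℚ⁺-reachable from i in N if and only if f' is ℚ⁺-reachable from i' in N'. -/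
open Finset

noncomputable section
open scoped Classical

variable {P T V : Type} [Fintype P] [Fintype T] [Fintype V]

/-!
Give every place `p` an input copy `inl p` and an output copy `inr p`: transitions consume from input
copies and produce in output copies, and each place gets a return transition that moves tokens from
`inr p` back to `inl p`, one datum at a time. A step of the original net is simulated by its split
version followed by returning everything it produced. Conversely, adding up the two copies of each
place turns a step of the split net into a step of the original net, or into no change at all for
a return step.
-/

section

omit [Fintype P] [Fintype T]

variable {Q : Type} {pos : Bool}

section Markings

variable {m a b : P → ℕ → ℚ}

theorem isMarking_zero : IsMarking pos (0 : P → ℕ → ℚ) := by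
  simp [IsMarking, FinCols]

theorem IsMarking.of_true (hm : IsMarking true m) : IsMarking pos m :=
  ⟨hm.1, fun _ => hm.2 rfl⟩

theorem IsMarking.add_s16 (ha : IsMarking pos a) (hb : IsMarking pos b) : IsMarking pos (a + b) := by
  refine ⟨(ha.1.union hb.1).subset ?_, fun h p α => add_nonneg (ha.2 h p α) (hb.2 h p α)⟩
  rintro α ⟨p, hp⟩
  by_contra hα
  simp only [Set.mem_union, Set.mem_ofPred_eq, not_or, not_exists, not_not] at hα
  exact hp (by simp [hα.1 p, hα.2 p])

theorem IsMarking.smul {c : ℚ} (hc : 0 ≤ c) (hm : IsMarking pos m) : IsMarking pos (c • m) := by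
  refine ⟨hm.1.subset ?_, fun h p α => mul_nonneg hc (hm.2 h p α)⟩
  rintro α ⟨p, hp⟩
  exact ⟨p, right_ne_zero_of_mul hp⟩

theorem IsMarking.comp (hm : IsMarking pos m) (g : Q → P) : IsMarking pos (m ∘ g) :=
  ⟨hm.1.subset fun _ ⟨q, hq⟩ => ⟨g q, hq⟩, fun h q => hm.2 h (g q)⟩

theorem IsMarking.sumElim {b : Q → ℕ → ℚ} (ha : IsMarking pos a) (hb : IsMarking pos b) :
    IsMarking pos (Sum.elim a b) := by
  refine ⟨(ha.1.union hb.1).subset ?_, fun h => Sum.rec (ha.2 h) (hb.2 h)⟩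
  rintro α ⟨p | q, h⟩
  exacts [.inl ⟨p, h⟩, .inr ⟨q, h⟩]

theorem isMarking_single (p : P) (α : ℕ) {r : ℚ} (hr : 0 ≤ r) :
    IsMarking pos (Pi.single p (Pi.single α r)) := by
  have hnonneg : (0 : P → ℕ → ℚ) ≤ Pi.single p (Pi.single α r) :=
    Pi.single_nonneg.2 (Pi.single_nonneg.2 hr)
  refine ⟨(Set.finite_singleton α).subset ?_, fun _ => hnonneg⟩
  rintro β ⟨q, hq⟩
  by_contra hβ
  rcases eq_or_ne q p with rfl | hqp <;> simp_all

@[elab_as_elim]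
theorem IsMarking.induction [Finite P] {motive : ∀ m : P → ℕ → ℚ, IsMarking true m → Prop}
    (zero : motive 0 isMarking_zero)
    (add_single : ∀ m p α r (hm : IsMarking true m) (hr : 0 ≤ r), motive m hm →
      motive (m + Pi.single p (Pi.single α r)) (hm.add_s16 (isMarking_single p α hr)))
    {m : P → ℕ → ℚ} (hm : IsMarking true m) : motive m hm := by
  cases nonempty_fintype P
  let token (u : P × ℕ) : P → ℕ → ℚ := Pi.single u.1 (Pi.single u.2 (m u.1 u.2))
  have sum_token : ∑ u ∈ univ ×ˢ hm.1.toFinset, token u = m := by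
    ext p α
    have outside_support (hα : α ∉ hm.1.toFinset) : 0 = m p α :=
      by_contra fun h => hα (hm.1.mem_toFinset.2 ⟨p, Ne.symm h⟩)
    simpa [token, sum_product, Finset.sum_apply, Pi.single_apply, ite_apply] using outside_support
  have partial_sum (S : Finset (P × ℕ)) :
      ∃ h : IsMarking true (∑ u ∈ S, token u), motive (∑ u ∈ S, token u) h := by
    induction S using Finset.induction_on with
    | empty => exact ⟨isMarking_zero, zero⟩
    | insert u S hu ih =>
      obtain ⟨hS, ih⟩ := ih
      have hmu : 0 ≤ m u.1 u.2 := hm.2 rfl u.1 u.2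
      rw [sum_insert hu, add_comm]
      exact ⟨_, add_single _ _ _ _ hS hmu ih⟩
  obtain ⟨_, hsum⟩ := partial_sum (univ ×ˢ hm.1.toFinset)
  simpa only [sum_token] using hsum

end Markings

section Columns

theorem exists_injective_nat_apply_eq {ι : Type*} [Countable ι] (i : ι) (n : ℕ) :
    ∃ π : ι → ℕ, π.Injective ∧ π i = n := by
  obtain ⟨π, hπ⟩ := exists_injective_nat ι
  exact ⟨Equiv.swap (π i) n ∘ π, (Equiv.injective _).comp hπ, Equiv.swap_apply_left _ _⟩

variable (π : V → ℕ)

/-- The `P × V` rational matrix `F(t,•)`, the counterpart of `preMat` for produced tokens. -/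
def postMat (N : UDPN P T V) (t : T) (p : P) (x : V) : ℚ := (N.post t p x : ℚ)

theorem compInv_delta (N : UDPN P T V) (t : T) :
    compInv (delta N t) π = compInv (postMat N t) π - compInv (preMat N t) π := by
  ext p α
  simp only [compInv, Pi.sub_apply, ← sum_sub_distrib]
  refine sum_congr rfl fun x _ => ?_
  split_ifs <;> simp [delta, preMat, postMat]

theorem compInv_zero : compInv (0 : P → V → ℚ) π = 0 := by
  ext p α
  simp [compInv]

theorem compInv_sumElim (A : P → V → ℚ) (B : Q → V → ℚ) :
    compInv (Sum.elim A B) π = Sum.elim (compInv A π) (compInv B π) := by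
  ext (p | q) α <;> rfl

theorem compInv_single (p : P) (x : V) (r : ℚ) :
    compInv (Pi.single p (Pi.single x r)) π = Pi.single p (Pi.single (π x) r) := by
  ext q α
  rcases eq_or_ne q p with rfl | hqp
  · rw [compInv, sum_eq_single x (fun y _ hy => by simp [hy]) (by simp)]
    simp [Pi.single_apply, eq_comm]
  · simp [compInv, hqp]

theorem isMarking_compInv {A : P → V → ℚ} (hA : 0 ≤ A) : IsMarking pos (compInv A π) := by
  refine ⟨(Set.finite_range π).subset ?_, fun _ p α => sum_nonneg fun x _ => ?_⟩
  · rintro α ⟨p, hp⟩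
    obtain ⟨x, -, hx⟩ := exists_ne_zero_of_sum_ne_zero hp
    exact ⟨x, (ite_ne_right_iff.1 hx).1⟩
  · split_ifs
    exacts [hA p x, le_rfl]

end Columns

section Steps

variable {N : UDPN P T V} {m m' : P → ℕ → ℚ}

/-- The one-step relation of a net: some step is fireable at `m` and leads to `m'`. -/
def OneStep (pos : Bool) (N : UDPN P T V) (m m' : P → ℕ → ℚ) : Prop :=
  ∃ s : Step T V, IsStep s ∧ stepFireable pos N m s ∧ m' = fun p α => m p α + stepEffect N s p α

/-- `r` is what remains of the marking between the consumption and the production of tokens. -/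
theorem oneStep_iff_exists_residue :
    OneStep pos N m m' ↔ ∃ (c : ℚ) (t : T) (π : V → ℕ) (r : P → ℕ → ℚ),
      0 ≤ c ∧ π.Injective ∧ IsMarking pos r ∧
      m = r + c • compInv (preMat N t) π ∧ m' = r + c • compInv (postMat N t) π := by
  have effect (c : ℚ) (t : T) (π : V → ℕ) (r : P → ℕ → ℚ) :
      (fun p α => (r + c • compInv (preMat N t) π) p α + stepEffect N ⟨c, t, π⟩ p α) =
        r + c • compInv (postMat N t) π := by
    ext p α
    simp only [stepEffect, compInv_delta, Pi.add_apply, Pi.sub_apply, Pi.smul_apply, smul_eq_mul]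
    ring
  constructor
  · rintro ⟨⟨c, t, π⟩, ⟨hc, hπ⟩, hr, rfl⟩
    refine ⟨c, t, π, m - c • compInv (preMat N t) π, hc, hπ, hr, (sub_add_cancel _ _).symm, ?_⟩
    rw [← effect, sub_add_cancel]
  · rintro ⟨c, t, π, r, hc, hπ, hr, rfl, rfl⟩
    refine ⟨⟨c, t, π⟩, ⟨hc, hπ⟩, ?_, (effect c t π r).symm⟩
    change IsMarking pos (r + c • compInv (preMat N t) π - c • compInv (preMat N t) π)
    rwa [add_sub_cancel_right]

theorem reach_iff_reflTransGen {i f : P → ℕ → ℚ} :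
    Reach pos N i f ↔ Relation.ReflTransGen (OneStep pos N) i f := by
  constructor
  · rintro ⟨ρ, hρ, hfire, rfl⟩
    induction ρ generalizing i with
    | nil => simpa [runEffect] using Relation.ReflTransGen.refl
    | cons s ρ ih =>
      obtain ⟨hs, hρ⟩ := List.forall_mem_cons.1 hρ
      have tail := ih hρ hfire.2
      simp only [runEffect, List.map_cons, List.sum_cons, ← add_assoc] at tail ⊢
      exact .head ⟨s, hs, hfire.1, rfl⟩ tail
  · intro h
    induction h using Relation.ReflTransGen.head_induction_on with
    | refl => exact ⟨[], by simp [IsRun], trivial, by simp [runEffect]⟩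
    | head step _ ih =>
      obtain ⟨s, hs, hfire, rfl⟩ := step
      obtain ⟨ρ, hρ, hρfire, rfl⟩ := ih
      refine ⟨s :: ρ, List.forall_mem_cons.2 ⟨hs, hρ⟩, ⟨hfire, hρfire⟩, ?_⟩
      simp only [runEffect, List.map_cons, List.sum_cons, ← add_assoc]

theorem reach_iff_eq_of_isEmpty [IsEmpty V] {i f : P → ℕ → ℚ} : Reach pos N i f ↔ i = f := by
  constructor
  · rintro ⟨ρ, -, -, rfl⟩
    simp [runEffect, stepEffect, compInv]
  · rintro rfl
    exact ⟨[], by simp [IsRun], trivial, by simp [runEffect]⟩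

end Steps

theorem sumElim_add_smul_sumElim {ι κ R M : Type*} [Add M] [SMul R M] (c : R) (f f' : ι → M)
    (g g' : κ → M) :
    Sum.elim f g + c • Sum.elim f' g' = Sum.elim (f + c • f') (g + c • g') := by
  ext (i | k) <;> rfl

section SplitNet

variable (N : UDPN P T V) (x₀ : V)

/-- The loop-less version of a net. The place `p` is split into the input copy `inl p` and the
output copy `inr p`; the transition `inl t` acts as `t`, consuming from input copies and producing
in output copies; the return transition `inr q` moves one token, whose datum is the value of `x₀`,
from `inr q` to `inl q`. -/
def splitNet : UDPN (P ⊕ P) (T ⊕ P) V where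
  pre
    | .inl p, .inl t => N.pre p t
    | .inr p, .inr q => Pi.single (M := fun _ => V → ℕ) q (Pi.single x₀ 1) p
    | _, _ => 0
  post
    | .inl t, .inr p => N.post t p
    | .inr q, .inl p => Pi.single (M := fun _ => V → ℕ) q (Pi.single x₀ 1) p
    | _, _ => 0

omit [Fintype V] in
theorem isLoopless_splitNet : IsLoopless (splitNet N x₀) := by
  rintro (t | q) ⟨p | p, ⟨x, hx⟩, ⟨y, hy⟩⟩ <;> simp [splitNet] at hx hy

variable (π : V → ℕ)

theorem compInv_preMat_splitNet_inl (t : T) :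
    compInv (preMat (splitNet N x₀) (.inl t)) π = Sum.elim (compInv (preMat N t) π) 0 := by
  have hpre : preMat (splitNet N x₀) (.inl t) = Sum.elim (preMat N t) (0 : P → V → ℚ) := by
    ext (p | p) x <;> simp [preMat, splitNet]
  rw [hpre, compInv_sumElim, compInv_zero]

theorem compInv_postMat_splitNet_inl (t : T) :
    compInv (postMat (splitNet N x₀) (.inl t)) π =
      Sum.elim (0 : P → ℕ → ℚ) (compInv (postMat N t) π) := by
  have hpost : postMat (splitNet N x₀) (.inl t) = Sum.elim (0 : P → V → ℚ) (postMat N t) := by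
    ext (p | p) x <;> simp [postMat, splitNet]
  rw [hpost, compInv_sumElim, compInv_zero]

theorem compInv_preMat_splitNet_inr (q : P) :
    compInv (preMat (splitNet N x₀) (.inr q)) π =
      Sum.elim (0 : P → ℕ → ℚ) (Pi.single q (Pi.single (π x₀) 1)) := by
  have hpre : preMat (splitNet N x₀) (.inr q) =
      Sum.elim (0 : P → V → ℚ) (Pi.single q (Pi.single x₀ 1)) := by
    ext (p | p) x <;>
      simp [preMat, splitNet, Pi.single_apply, ite_apply, apply_ite (Nat.cast : ℕ → ℚ)]
  rw [hpre, compInv_sumElim, compInv_zero, compInv_single]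

theorem compInv_postMat_splitNet_inr (q : P) :
    compInv (postMat (splitNet N x₀) (.inr q)) π =
      Sum.elim (Pi.single q (Pi.single (π x₀) 1)) 0 := by
  have hpost : postMat (splitNet N x₀) (.inr q) =
      Sum.elim (Pi.single q (Pi.single x₀ 1)) (0 : P → V → ℚ) := by
    ext (p | p) x <;>
      simp [postMat, splitNet, Pi.single_apply, ite_apply, apply_ite (Nat.cast : ℕ → ℚ)]
  rw [hpost, compInv_sumElim, compInv_zero, compInv_single]

end SplitNet

section Merge

/-- The projection from markings of the split net to markings of the original one: it adds up the
input and the output copy of each place. -/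
def mergeCopies : (P ⊕ P → ℕ → ℚ) →ₗ[ℚ] (P → ℕ → ℚ) :=
  LinearMap.funLeft ℚ (ℕ → ℚ) Sum.inl + LinearMap.funLeft ℚ (ℕ → ℚ) Sum.inr

theorem mergeCopies_sumElim (a b : P → ℕ → ℚ) : mergeCopies (Sum.elim a b) = a + b :=
  rfl

theorem isMarking_mergeCopies {m : P ⊕ P → ℕ → ℚ} (hm : IsMarking pos m) :
    IsMarking pos (mergeCopies m) :=
  (hm.comp Sum.inl).add_s16 (hm.comp Sum.inr)

theorem OneStep.reflTransGen_mergeCopies {N : UDPN P T V} {x₀ : V} {m m' : P ⊕ P → ℕ → ℚ}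
    (h : OneStep pos (splitNet N x₀) m m') :
    Relation.ReflTransGen (OneStep pos N) (mergeCopies m) (mergeCopies m') := by
  obtain ⟨c, t | q, π, r, hc, hπ, hr, rfl, rfl⟩ := oneStep_iff_exists_residue.1 h
  · refine .single (oneStep_iff_exists_residue.2
      ⟨c, t, π, mergeCopies r, hc, hπ, isMarking_mergeCopies hr, ?_, ?_⟩)
    · rw [compInv_preMat_splitNet_inl, map_add, map_smul, mergeCopies_sumElim, add_zero]
    · rw [compInv_postMat_splitNet_inl, map_add, map_smul, mergeCopies_sumElim, zero_add]
  · rw [compInv_preMat_splitNet_inr, compInv_postMat_splitNet_inr]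
    simp only [map_add, map_smul, mergeCopies_sumElim, zero_add, add_zero]
    exact .refl

end Merge

section Simulation

variable (N : UDPN P T V) (x₀ : V) {a b m m' : P → ℕ → ℚ}

theorem oneStep_splitNet_return (ha : IsMarking pos a) (hb : IsMarking pos b) (q : P) (α : ℕ)
    {r : ℚ} (hr : 0 ≤ r) :
    OneStep pos (splitNet N x₀) (Sum.elim a (b + Pi.single q (Pi.single α r)))
      (Sum.elim (a + Pi.single q (Pi.single α r)) b) := by
  obtain ⟨π, hπ, rfl⟩ := exists_injective_nat_apply_eq x₀ α
  have hsingle : r • (Pi.single q (Pi.single (π x₀) 1) : P → ℕ → ℚ) =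
      Pi.single q (Pi.single (π x₀) r) := by
    simp only [← Pi.single_smul, smul_eq_mul, mul_one]
  refine oneStep_iff_exists_residue.2
    ⟨r, .inr q, π, Sum.elim a b, hr, hπ, ha.sumElim hb, ?_, ?_⟩
  · rw [compInv_preMat_splitNet_inr, sumElim_add_smul_sumElim, hsingle, smul_zero, add_zero]
  · rw [compInv_postMat_splitNet_inr, sumElim_add_smul_sumElim, hsingle, smul_zero, add_zero]

theorem reflTransGen_splitNet_return [Finite P] (ha : IsMarking pos a) (hb : IsMarking true b) :
    Relation.ReflTransGen (OneStep pos (splitNet N x₀)) (Sum.elim a b) (Sum.elim (a + b) 0) := by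
  induction hb using IsMarking.induction generalizing a with
  | zero => rw [add_zero]
  | add_single b q α r hb hr ih =>
    refine .head (oneStep_splitNet_return N x₀ ha hb.of_true q α hr) ?_
    rw [add_comm b, ← add_assoc]
    exact ih (ha.add_s16 (isMarking_single q α hr))

variable {N}

theorem OneStep.reflTransGen_splitNet [Finite P] (h : OneStep pos N m m') :
    Relation.ReflTransGen (OneStep pos (splitNet N x₀)) (Sum.elim m 0) (Sum.elim m' 0) := by
  obtain ⟨c, t, π, r, hc, hπ, hr, rfl, rfl⟩ := oneStep_iff_exists_residue.1 h
  have hproduced : IsMarking true (c • compInv (postMat N t) π) :=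
    (isMarking_compInv π fun _ _ => Nat.cast_nonneg _).smul hc
  have hsplit : OneStep pos (splitNet N x₀) (Sum.elim (r + c • compInv (preMat N t) π) 0)
      (Sum.elim r (c • compInv (postMat N t) π)) := by
    refine oneStep_iff_exists_residue.2
      ⟨c, .inl t, π, Sum.elim r 0, hc, hπ, hr.sumElim isMarking_zero, ?_, ?_⟩
    · rw [compInv_preMat_splitNet_inl, sumElim_add_smul_sumElim, smul_zero, add_zero]
    · rw [compInv_postMat_splitNet_inl, sumElim_add_smul_sumElim, smul_zero, add_zero, zero_add]
  exact .head hsplit (reflTransGen_splitNet_return N x₀ hr hproduced)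

theorem reach_splitNet_iff [Finite P] {i f : P → ℕ → ℚ} :
    Reach pos (splitNet N x₀) (Sum.elim i 0) (Sum.elim f 0) ↔ Reach pos N i f := by
  simp only [reach_iff_reflTransGen]
  constructor <;> intro h
  · have hmerged := h.lift' mergeCopies fun _ _ => OneStep.reflTransGen_mergeCopies
    simpa only [Function.onFun, mergeCopies_sumElim, add_zero] using hmerged
  · exact h.lift' (fun m : P → ℕ → ℚ => Sum.elim m (0 : P → ℕ → ℚ))
      fun _ _ => OneStep.reflTransGen_splitNet x₀

end Simulation

theorem loopless_transformation_general [Finite P] (pos : Bool) (N : UDPN P T V) :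
    ∃ N' : UDPN (P ⊕ P) (T ⊕ P) V, IsLoopless N' ∧ ∀ i f : P → ℕ → ℚ,
      Reach pos N i f ↔ Reach pos N' (Sum.elim i 0) (Sum.elim f 0) := by
  rcases isEmpty_or_nonempty V with _ | ⟨⟨x₀⟩⟩
  · refine ⟨⟨0, 0⟩, fun _ ⟨_, ⟨x, _⟩, _⟩ => isEmptyElim x, fun i f => ?_⟩
    simp only [reach_iff_eq_of_isEmpty, Sum.elim_eq_iff, and_true]
  · exact ⟨splitNet N x₀, isLoopless_splitNet N x₀, fun i f => (reach_splitNet_iff x₀).symm⟩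

end

/-- Every UDPN with ℚ⁺-markings `i`, `f` can be transformed,
preserving ℚ⁺-reachability, into a loop-less UDPN with `2·|P|` places
(`P ⊕ P`) and `|T| + |P|` transitions (`T ⊕ P`), with ℚ⁺-markings `i'`, `f'`. -/
theorem loopless_transformation
    (N : UDPN P T V) (i f : P → ℕ → ℚ)
    (hi : IsMarking true i) (hf : IsMarking true f) :
    ∃ (N' : UDPN (P ⊕ P) (T ⊕ P) V) (i' f' : (P ⊕ P) → ℕ → ℚ),
      IsLoopless N' ∧ IsMarking true i' ∧ IsMarking true f' ∧
      Fintype.card (P ⊕ P) = 2 * Fintype.card P ∧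
      Fintype.card (T ⊕ P) = Fintype.card T + Fintype.card P ∧
      (Reach true N i f ↔ Reach true N' i' f') := by
  obtain ⟨N', hN', hreach⟩ := loopless_transformation_general true N
  exact ⟨N', Sum.elim i 0, Sum.elim f 0, hN', hi.sumElim isMarking_zero,
    hf.sumElim isMarking_zero, by rw [Fintype.card_sum, two_mul], Fintype.card_sum, hreach i f⟩
end
end
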